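/- Fix r with 2 < r < 144/55, η with 0 < η < 1/35, reals ε₁ > ε₂ > 0 and τ₁ > τ₂ > 1. Then there exist c > 0 and B₀ such that for all B ≥ B₀, the number of quadruples (x,y,s,t) of positive integers with gcd(x,y) = gcd(s,t) = 1, y/x > 1, ε₂ < B^(1/r)·(t/s − 1) ≤ ε₁, τ₂ ≤ (t/s − 1)/(y/x − 1) ≤ τ₁, and H(x,y,s,t) ≤ B, is at least c·B^((1+η)(1/2 − 1/r))·(log B)³. (Lower bound for the sub-critical zoom at Q on Y₄.) -/

import Mathlib

/-!
Put `D = B ^ (1/r)` and look for points with `y/x = α/β` and `t/s = αβ/2`, where `α` and `β` are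
rational numbers at distance `O(1/D)` from `√2`. Whatever cancels in these quotients, the height of
such a point is at most `(num α · num β)²`. Since `√2` is badly approximable, Dirichlet's theorem
puts a fraction with denominator `O(√D)` in every window of length `≍ 1/D` around `√2`. Take one
such fraction for `α`, and for `β` the weighted mediants of two such fractions with coprime weights
up to `K`: these are `≫ K²` fractions with denominators `O(K√D)`, hence `≫ K²` points of height
`O((KD)²)`. The choice `K ≍ B ^ (1/2 - 1/r)` gives `≫ B ^ (1 - 2/r)` points, all on the curve
`(y/x)(t/s) = α²/2`.
-/

open Filter Set Topology

/-! ### Badly approximable numbers -/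

/-- A real number is badly approximable if `|ξ - q| ≥ κ / (den q)²` for some `κ > 0` and all
rational `q`; by Dirichlet's theorem this is the largest possible order of magnitude. -/
def BadlyApproximable (ξ : ℝ) : Prop :=
  ∃ κ : ℝ, 0 < κ ∧ ∀ q : ℚ, κ ≤ (q.den : ℝ) ^ 2 * |ξ - q|

lemma badlyApproximable_of_natDegree_le_two {ξ : ℝ} (hξ : Irrational ξ) {f : Polynomial ℤ}
    (hf : f ≠ 0) (hroot : Polynomial.aeval ξ f = 0) (hdeg : f.natDegree ≤ 2) :
    BadlyApproximable ξ := by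
  rw [Polynomial.aeval_def, ← Polynomial.eval_map] at hroot
  obtain ⟨A, hA, hdist⟩ := Liouville.exists_pos_real_of_irrational_root hξ hf hroot
  refine ⟨1 / A, by positivity, fun q => ?_⟩
  have hden : ((q.den - 1 : ℕ) : ℝ) + 1 = q.den := by
    exact_mod_cast Nat.sub_add_cancel q.den_pos
  have hpow : (q.den : ℝ) ^ f.natDegree ≤ (q.den : ℝ) ^ 2 :=
    pow_le_pow_right₀ (by exact_mod_cast q.den_pos) hdeg
  have hq := hdist q.num (q.den - 1)
  rw [hden, ← Rat.cast_def, ← mul_assoc] at hq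
  rw [div_le_iff₀ hA]
  exact hq.trans (by gcongr)

lemma badlyApproximable_sqrt_two : BadlyApproximable √2 := by
  have hmonic : (Polynomial.X ^ 2 - Polynomial.C 2 : Polynomial ℤ).Monic :=
    Polynomial.monic_X_pow_sub_C 2 two_ne_zero
  exact badlyApproximable_of_natDegree_le_two irrational_sqrt_two hmonic.ne_zero
    (by rw [map_sub, map_pow, Polynomial.aeval_X, Polynomial.aeval_C]; norm_num)
    Polynomial.natDegree_X_pow_sub_C.le

/- The fraction supplied by Dirichlet's theorem at `ζ` works: if it were at distance at least `ρ`
from `ζ`, its denominator would be so small that it would approximate `ξ` itself too well. -/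
lemma exists_rat_abs_sub_lt_of_forall_le {ξ κ : ℝ} (hbad : ∀ q : ℚ, κ ≤ (q.den : ℝ) ^ 2 * |ξ - q|)
    {ζ ρ : ℝ} (hρ : 0 < ρ) {n : ℕ} (hn : 0 < n) (hκ : 1 + |ξ - ζ| / ρ < κ * ρ * n ^ 2) :
    ∃ q : ℚ, |ζ - q| < ρ ∧ q.den ≤ n := by
  obtain ⟨q, hq, hqn⟩ := Real.exists_rat_abs_sub_le_and_den_le ζ hn
  refine ⟨q, ?_, hqn⟩
  by_contra! hfar
  have hn₀ : (0 : ℝ) < n := by exact_mod_cast hn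
  have hden₀ : (0 : ℝ) < q.den := by exact_mod_cast q.den_pos
  have hdirichlet : n * q.den * |ζ - q| ≤ 1 := by
    rw [← le_div_iff₀' (by positivity)]
    exact hq.trans (by gcongr; linarith)
  have hden : n * q.den * ρ ≤ 1 := hdirichlet.trans' (by gcongr)
  have hξq : |ξ - q| ≤ (1 + |ξ - ζ| / ρ) * |ζ - q| :=
    calc |ξ - q| ≤ |ζ - q| + |ξ - ζ| / ρ * ρ := by
          rw [div_mul_cancel₀ _ hρ.ne', add_comm]
          exact abs_sub_le _ _ _
      _ ≤ (1 + |ξ - ζ| / ρ) * |ζ - q| := by rw [add_mul, one_mul]; gcongr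
  have hle : κ * ρ * n ^ 2 ≤ 1 + |ξ - ζ| / ρ :=
    calc κ * ρ * n ^ 2
        ≤ q.den ^ 2 * ((1 + |ξ - ζ| / ρ) * |ζ - q|) * ρ * n ^ 2 := by
          gcongr
          exact (hbad q).trans (by gcongr)
      _ = (1 + |ξ - ζ| / ρ) * ((n * q.den * |ζ - q|) * (n * q.den * ρ)) := by ring
      _ ≤ (1 + |ξ - ζ| / ρ) * (1 * 1) := by gcongr
      _ = 1 + |ξ - ζ| / ρ := by ring
  exact hκ.not_ge hle

lemma BadlyApproximable.exists_rat_abs_sub_lt {ξ : ℝ} (hξ : BadlyApproximable ξ) (w : ℝ) {δ : ℝ}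
    (hδ : 0 < δ) :
    ∃ C : ℝ, 0 < C ∧ ∀ D : ℝ, 1 ≤ D →
      ∃ q : ℚ, |ξ + w / D - q| < δ / D ∧ (q.den : ℝ) ≤ C * √D := by
  obtain ⟨κ, hκ, hbad⟩ := hξ
  obtain ⟨C, hC⟩ := exists_gt (max 1 ((1 + |w| / δ) / (κ * δ)))
  obtain ⟨hC₁, hC₂⟩ := max_lt_iff.1 hC
  have hC₀ : 0 < C := one_pos.trans hC₁
  refine ⟨C + 1, by positivity, fun D hD => ?_⟩
  have hD₀ : 0 < D := one_pos.trans_le hD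
  have hsqrt : 1 ≤ √D := Real.one_le_sqrt.2 hD
  have hn : 0 < ⌈C * √D⌉₊ := Nat.ceil_pos.2 (by positivity)
  have hshift : |ξ - (ξ + w / D)| / (δ / D) = |w| / δ := by
    rw [sub_add_cancel_left, abs_neg, abs_div, abs_of_pos hD₀]
    field_simp
  have hlarge : 1 + |ξ - (ξ + w / D)| / (δ / D) < κ * (δ / D) * ⌈C * √D⌉₊ ^ 2 :=
    calc 1 + |ξ - (ξ + w / D)| / (δ / D) = 1 + |w| / δ := by rw [hshift]
      _ < C * (κ * δ) := (div_lt_iff₀ (by positivity)).1 hC₂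
      _ ≤ C ^ 2 * (κ * δ) := by gcongr; exact le_self_pow₀ hC₁.le two_ne_zero
      _ = κ * (δ / D) * (C * √D) ^ 2 := by rw [mul_pow, Real.sq_sqrt hD₀.le]; field_simp
      _ ≤ κ * (δ / D) * ⌈C * √D⌉₊ ^ 2 := by gcongr; exact Nat.le_ceil _
  obtain ⟨q, hq, hqn⟩ := exists_rat_abs_sub_lt_of_forall_le hbad (div_pos hδ hD₀) hn hlarge
  refine ⟨q, hq, (Nat.cast_le.2 hqn).trans ?_⟩
  have := Nat.ceil_lt_add_one (a := C * √D) (by positivity)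
  linarith

lemma BadlyApproximable.eventually_exists_nnrat_mem_Ioo {ξ : ℝ} (hξ : BadlyApproximable ξ)
    (hpos : 0 < ξ) {u v : ℝ} (huv : u < v) :
    ∃ C : ℝ, 0 < C ∧ ∀ᶠ D : ℝ in atTop,
      ∃ q : ℚ≥0, (q : ℝ) ∈ Ioo (ξ + u / D) (ξ + v / D) ∧ (q.den : ℝ) ≤ C * √D := by
  obtain ⟨C, hC, hq⟩ := hξ.exists_rat_abs_sub_lt ((u + v) / 2) (half_pos (sub_pos.2 huv))
  have hlim : Tendsto (fun D : ℝ => ξ + u / D) atTop (𝓝 ξ) := by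
    simpa using (tendsto_const_nhds (x := ξ)).add (tendsto_id.const_div_atTop u)
  refine ⟨C, hC, ?_⟩
  filter_upwards [eventually_ge_atTop 1, hlim.eventually_const_lt hpos] with D hD hD'
  obtain ⟨q, hnear, hden⟩ := hq D hD
  have hmem : (q : ℝ) ∈ Ioo (ξ + u / D) (ξ + v / D) := by
    rw [abs_lt] at hnear
    exact ⟨by linear_combination hnear.2, by linear_combination hnear.1⟩
  lift q to ℚ≥0 using mod_cast (hD'.trans hmem.1).le
  exact ⟨q, mod_cast hmem, hden⟩

/-! ### Many fractions in an interval -/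

/-- The pairs of coprime integers in `[1, K]²`, which index the reduced fractions of height at most
`K`. -/
def coprimePairs (K : ℕ) : Finset (ℕ × ℕ) :=
  (Finset.Ioc 0 K ×ˢ Finset.Ioc 0 K).filter fun z => z.1.Coprime z.2

lemma mem_coprimePairs {K : ℕ} {z : ℕ × ℕ} :
    z ∈ coprimePairs K ↔ (0 < z.1 ∧ z.1 ≤ K) ∧ (0 < z.2 ∧ z.2 ≤ K) ∧ z.1.Coprime z.2 := by
  simp only [coprimePairs, Finset.mem_filter, Finset.mem_product, Finset.mem_Ioc, and_assoc]

lemma sum_Ioc_one_inv_sq_le (K : ℕ) : ∑ g ∈ Finset.Ioc 1 K, ((g : ℝ) ^ 2)⁻¹ ≤ 3 / 4 := by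
  rcases lt_or_ge K 2 with hK | hK
  · rw [Finset.Ioc_eq_empty (by omega)]
    norm_num
  have htail := sum_Ioc_inv_sq_le_sub (α := ℝ) two_ne_zero hK
  rw [← Finset.sum_Ioc_consecutive _ one_le_two hK, show Finset.Ioc 1 2 = {2} from rfl,
    Finset.sum_singleton]
  have hK0 : (0 : ℝ) ≤ (K : ℝ)⁻¹ := by positivity
  norm_num at htail ⊢
  linarith

lemma sq_le_card_coprimePairs_add_sum (K : ℕ) :
    K ^ 2 ≤ (coprimePairs K).card + ∑ g ∈ Finset.Ioc 1 K, (K / g) ^ 2 := by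
  set box := Finset.Ioc 0 K ×ˢ Finset.Ioc 0 K
  set multiples : ℕ → Finset ℕ := fun g => (Finset.Ioc 0 K).filter (g ∣ ·)
  have hsub : (box.filter fun z => ¬ z.1.Coprime z.2) ⊆
      (Finset.Ioc 1 K).biUnion fun g => multiples g ×ˢ multiples g := by
    intro z hz
    simp only [box, multiples, Finset.mem_filter, Finset.mem_product, Finset.mem_Ioc,
      Finset.mem_biUnion] at hz ⊢
    obtain ⟨⟨h₁, h₂⟩, hgcd⟩ := hz
    have hpos := Nat.gcd_pos_of_pos_left z.2 h₁.1
    exact ⟨z.1.gcd z.2, ⟨lt_of_le_of_ne hpos (Ne.symm hgcd), (Nat.gcd_le_left _ h₁.1).trans h₁.2⟩,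
      ⟨h₁, Nat.gcd_dvd_left _ _⟩, h₂, Nat.gcd_dvd_right _ _⟩
  have hcard := (Finset.card_le_card hsub).trans Finset.card_biUnion_le
  simp only [multiples, Finset.card_product, Nat.Ioc_filter_dvd_card_eq_div, ← sq] at hcard
  calc K ^ 2 = box.card := by rw [Finset.card_product, Nat.card_Ioc, Nat.sub_zero, sq]
    _ = (coprimePairs K).card + (box.filter fun z => ¬ z.1.Coprime z.2).card :=
      (Finset.card_filter_add_card_filter_not _).symm
    _ ≤ _ := by gcongr

lemma sq_div_four_le_card_coprimePairs (K : ℕ) : (K : ℝ) ^ 2 / 4 ≤ (coprimePairs K).card := by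
  have hcount : (K : ℝ) ^ 2 ≤ (coprimePairs K).card + ∑ g ∈ Finset.Ioc 1 K, ((K / g : ℕ) : ℝ) ^ 2 :=
    mod_cast sq_le_card_coprimePairs_add_sum K
  have hsum : ∑ g ∈ Finset.Ioc 1 K, ((K / g : ℕ) : ℝ) ^ 2 ≤ 3 / 4 * (K : ℝ) ^ 2 :=
    calc ∑ g ∈ Finset.Ioc 1 K, ((K / g : ℕ) : ℝ) ^ 2
        ≤ ∑ g ∈ Finset.Ioc 1 K, ((g : ℝ) ^ 2)⁻¹ * (K : ℝ) ^ 2 := by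
          gcongr with g
          calc ((K / g : ℕ) : ℝ) ^ 2 ≤ ((K : ℝ) / g) ^ 2 := by gcongr; exact Nat.cast_div_le
            _ = ((g : ℝ) ^ 2)⁻¹ * (K : ℝ) ^ 2 := by ring
      _ ≤ 3 / 4 * (K : ℝ) ^ 2 := by
        rw [← Finset.sum_mul]
        gcongr
        exact sum_Ioc_one_inv_sq_le K
  linarith

/-- The mediant of two fractions `p / q` and `p' / q'` in lowest terms with weights
`z = (m, n)`, that is `(m p + n p') / (m q + n q')`. -/
def weightedMediant (β β' : ℚ≥0) (z : ℕ × ℕ) : ℚ≥0 :=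
  (z.1 * β.num + z.2 * β'.num : ℕ) / (z.1 * β.den + z.2 * β'.den : ℕ)

lemma exists_eq_mul_num_and_eq_mul_den {v : ℚ≥0} {m n : ℕ} (hn : n ≠ 0) (h : v = m / n) :
    ∃ k, m = k * v.num ∧ n = k * v.den := by
  have hcross : m * v.den = v.num * n := by
    have hvn : v * n = m := by rw [h]; field_simp
    have : (m : ℚ≥0) * v.den = v.num * n := by rw [← hvn, ← v.mul_den_eq_num]; ring
    exact_mod_cast this
  obtain ⟨k, rfl⟩ : v.den ∣ n :=
    v.coprime_num_den.symm.dvd_of_dvd_mul_left (Dvd.intro_left m hcross)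
  refine ⟨k, Nat.eq_of_mul_eq_mul_right v.den_pos ?_, mul_comm _ _⟩
  rw [hcross]
  ring

lemma nnrat_den_natCast_div_le {m n : ℕ} (hn : n ≠ 0) : ((m : ℚ≥0) / n).den ≤ n := by
  obtain ⟨k, -, hk⟩ := exists_eq_mul_num_and_eq_mul_den hn (rfl : (m : ℚ≥0) / n = m / n)
  exact Nat.le_of_dvd (Nat.pos_of_ne_zero hn) (Dvd.intro_left k hk.symm)

section WeightedMediant

variable {β β' : ℚ≥0} {z : ℕ × ℕ}

lemma weightedMediant_den_pos (β β' : ℚ≥0) (hz : 0 < z.1) :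
    0 < z.1 * β.den + z.2 * β'.den :=
  Nat.add_pos_left (Nat.mul_pos hz β.den_pos) _

lemma den_weightedMediant_le (hz : 0 < z.1) :
    (weightedMediant β β' z).den ≤ z.1 * β.den + z.2 * β'.den :=
  nnrat_den_natCast_div_le (weightedMediant_den_pos β β' hz).ne'

lemma weightedMediant_mem_Ioo {l u : ℝ} (hβ : (β : ℝ) ∈ Ioo l u) (hβ' : (β' : ℝ) ∈ Ioo l u)
    (hz : 0 < z.1) : (weightedMediant β β' z : ℝ) ∈ Ioo l u := by
  have hpos : (0 : ℝ) < z.1 * β.den + z.2 * β'.den := by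
    exact_mod_cast weightedMediant_den_pos β β' hz
  have hnum : (β.num : ℝ) = β * β.den := by exact_mod_cast β.mul_den_eq_num.symm
  have hnum' : (β'.num : ℝ) = β' * β'.den := by exact_mod_cast β'.mul_den_eq_num.symm
  have hm : (0 : ℝ) < z.1 * β.den := by exact_mod_cast Nat.mul_pos hz β.den_pos
  have hcast : (weightedMediant β β' z : ℝ) =
      (β * (z.1 * β.den) + β' * (z.2 * β'.den)) / (z.1 * β.den + z.2 * β'.den) := by
    rw [weightedMediant]
    push_cast
    rw [hnum, hnum']
    ring
  rw [hcast, mem_Ioo, lt_div_iff₀ hpos, div_lt_iff₀ hpos, mul_add, mul_add]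
  exact ⟨add_lt_add_of_lt_of_le (by gcongr; exact hβ.1) (by gcongr; exact hβ'.1.le),
    add_lt_add_of_lt_of_le (by gcongr; exact hβ.2) (by gcongr; exact hβ'.2.le)⟩

lemma mul_eq_mul_of_weightedMediant_eq (hne : β ≠ β') {w : ℕ × ℕ} (hz : 0 < z.1) (hw : 0 < w.1)
    (h : weightedMediant β β' z = weightedMediant β β' w) : z.1 * w.2 = w.1 * z.2 := by
  have hdz := (weightedMediant_den_pos (z := z) β β' hz).ne'
  have hdw := (weightedMediant_den_pos (z := w) β β' hw).ne'
  rw [weightedMediant, weightedMediant,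
    div_eq_div_iff (by exact_mod_cast hdz) (by exact_mod_cast hdw)] at h
  have hdet : (β.num * β'.den - β'.num * β.den : ℤ) ≠ 0 := by
    rw [sub_ne_zero]
    intro heq
    refine hne ?_
    rw [← β.num_div_den, ← β'.num_div_den, div_eq_div_iff (by simp) (by simp)]
    exact_mod_cast heq
  have hcross : ((z.1 * β.num + z.2 * β'.num) * (w.1 * β.den + w.2 * β'.den) : ℤ) =
      (w.1 * β.num + w.2 * β'.num) * (z.1 * β.den + z.2 * β'.den) := by
    exact_mod_cast h
  have hzw : (z.1 * w.2 : ℤ) = w.1 * z.2 :=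
    mul_right_cancel₀ hdet (by linear_combination hcross)
  exact_mod_cast hzw

end WeightedMediant

lemma prod_eq_of_coprime_of_mul_eq_mul {z w : ℕ × ℕ} (hz₁ : 0 < z.1)
    (hz : z.1.Coprime z.2) (hw : w.1.Coprime w.2) (h : z.1 * w.2 = w.1 * z.2) : z = w := by
  have hfst : z.1 = w.1 := Nat.dvd_antisymm (hz.dvd_of_dvd_mul_right (Dvd.intro _ h))
    (hw.dvd_of_dvd_mul_right (Dvd.intro _ h.symm))
  rw [← hfst] at h
  exact Prod.ext hfst (Nat.eq_of_mul_eq_mul_left hz₁ h).symm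

lemma weightedMediant_injOn_coprimePairs {β β' : ℚ≥0} (hne : β ≠ β') (K : ℕ) :
    InjOn (weightedMediant β β') (coprimePairs K) := by
  intro z hz w hw h
  obtain ⟨hz₁, -, hzc⟩ := mem_coprimePairs.1 hz
  obtain ⟨hw₁, -, hwc⟩ := mem_coprimePairs.1 hw
  exact prod_eq_of_coprime_of_mul_eq_mul hz₁.1 hzc hwc
    (mul_eq_mul_of_weightedMediant_eq hne hz₁.1 hw₁.1 h)

lemma exists_finset_nnrat_mem_Ioo {l u : ℝ} {β β' : ℚ≥0} (hne : β ≠ β') (hβ : (β : ℝ) ∈ Ioo l u)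
    (hβ' : (β' : ℝ) ∈ Ioo l u) (K : ℕ) :
    ∃ T : Finset ℚ≥0, (K : ℝ) ^ 2 / 4 ≤ T.card ∧
      ∀ b ∈ T, (b : ℝ) ∈ Ioo l u ∧ b.den ≤ K * (β.den + β'.den) := by
  refine ⟨(coprimePairs K).image (weightedMediant β β'), ?_, ?_⟩
  · rw [Finset.card_image_of_injOn (weightedMediant_injOn_coprimePairs hne K)]
    exact sq_div_four_le_card_coprimePairs K
  · simp only [Finset.forall_mem_image]
    intro z hz
    obtain ⟨⟨hz₁, hzK⟩, ⟨-, hzK'⟩, -⟩ := mem_coprimePairs.1 hz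
    refine ⟨weightedMediant_mem_Ioo hβ hβ' hz₁, (den_weightedMediant_le hz₁).trans ?_⟩
    rw [mul_add]
    gcongr

lemma BadlyApproximable.eventually_exists_finset_nnrat_mem_Ioo {ξ : ℝ}
    (hξ : BadlyApproximable ξ) (hpos : 0 < ξ) {u v : ℝ} (huv : u < v) :
    ∃ C : ℝ, 0 < C ∧ ∀ᶠ D : ℝ in atTop, ∀ K : ℕ, ∃ T : Finset ℚ≥0, (K : ℝ) ^ 2 / 4 ≤ T.card ∧
      ∀ b ∈ T, (b : ℝ) ∈ Ioo (ξ + u / D) (ξ + v / D) ∧ (b.den : ℝ) ≤ C * K * √D := by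
  obtain ⟨m, hum, hmv⟩ := exists_between huv
  obtain ⟨C, hC, hβ⟩ := hξ.eventually_exists_nnrat_mem_Ioo hpos hum
  obtain ⟨C', hC', hβ'⟩ := hξ.eventually_exists_nnrat_mem_Ioo hpos hmv
  refine ⟨C + C', by positivity, ?_⟩
  filter_upwards [hβ, hβ', eventually_gt_atTop 0] with D ⟨β, hmem, hden⟩ ⟨β', hmem', hden'⟩ hD K
  have hne : β ≠ β' := by
    rintro rfl
    exact hmem.2.not_gt hmem'.1
  obtain ⟨T, hcard, hT⟩ := exists_finset_nnrat_mem_Ioo hne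
    ⟨hmem.1, hmem.2.trans (by gcongr)⟩ ⟨hmem'.1.trans' (by gcongr), hmem'.2⟩ K
  refine ⟨T, hcard, fun b hb => ⟨(hT b hb).1, ?_⟩⟩
  calc (b.den : ℝ) ≤ K * (β.den + β'.den) := mod_cast (hT b hb).2
    _ ≤ K * (C * √D + C' * √D) := by gcongr
    _ = (C + C') * K * √D := by ring

/-! ### The height and the zoom -/

/-- The anticanonical Weil height `t² x y / (gcd(x,s) gcd(x,t) gcd(y,s) gcd(y,t))` of the point
`[x:y] × [s:t]` of `Y₄`, given by primitive coordinates with `t/s > y/x > 1`. -/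
noncomputable def anticanonicalHeight (x y s t : ℕ) : ℝ :=
  (t : ℝ) ^ 2 * x * y /
    ((Nat.gcd x s : ℝ) * (Nat.gcd x t : ℝ) * (Nat.gcd y s : ℝ) * (Nat.gcd y t : ℝ))

/-- The region around `Q` seen by the zoom with dilation factor `D`, in the coordinates
`v = y/x` and `w = t/s`. -/
def zoomRegion (ε₁ ε₂ τ₁ τ₂ D : ℝ) : Set (ℝ × ℝ) :=
  {p | p.1 > 1 ∧ ε₂ < D * (p.2 - 1) ∧ D * (p.2 - 1) ≤ ε₁ ∧
    τ₂ ≤ (p.2 - 1) / (p.1 - 1) ∧ (p.2 - 1) / (p.1 - 1) ≤ τ₁}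

/-- The rational points of height at most `B` in the zoom with dilation factor `D`, as quadruples
`(x, y, s, t)` of primitive coordinates. -/
def zoomPoints (ε₁ ε₂ τ₁ τ₂ D B : ℝ) : Set (ℕ × ℕ × ℕ × ℕ) :=
  {q | 0 < q.1 ∧ 0 < q.2.1 ∧ 0 < q.2.2.1 ∧ 0 < q.2.2.2 ∧
    Nat.Coprime q.1 q.2.1 ∧ Nat.Coprime q.2.2.1 q.2.2.2 ∧
    ((q.2.1 : ℝ) / q.1, (q.2.2.2 : ℝ) / q.2.2.1) ∈ zoomRegion ε₁ ε₂ τ₁ τ₂ D ∧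
    anticanonicalHeight q.1 q.2.1 q.2.2.1 q.2.2.2 ≤ B}

/-- The primitive coordinates `(x, y, s, t)` of the point with `y/x = v` and `t/s = w`. -/
def primitiveCoords (v w : ℚ≥0) : ℕ × ℕ × ℕ × ℕ :=
  (v.den, v.num, w.den, w.num)

section Height

variable {x y s t : ℕ}

lemma anticanonicalHeight_eq_div_gcd (hxy : x.Coprime y) (hst : s.Coprime t) :
    anticanonicalHeight x y s t = (t : ℝ) ^ 2 * x * y / Nat.gcd (x * y) (s * t) := by
  rw [anticanonicalHeight, hst.gcd_mul, Nat.gcd_comm (x * y), Nat.gcd_comm (x * y), hxy.gcd_mul,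
    hxy.gcd_mul, Nat.gcd_comm s, Nat.gcd_comm s, Nat.gcd_comm t, Nat.gcd_comm t]
  push_cast
  ring

lemma sq_le_anticanonicalHeight (hx : 0 < x) (hy : 0 < y) (hxy : x.Coprime y)
    (hst : s.Coprime t) : (t : ℝ) ^ 2 ≤ anticanonicalHeight x y s t := by
  have hgcd : Nat.gcd (x * y) (s * t) ≤ x * y := Nat.gcd_le_left _ (Nat.mul_pos hx hy)
  have hgcd₀ : 0 < Nat.gcd (x * y) (s * t) := Nat.gcd_pos_of_pos_left _ (Nat.mul_pos hx hy)
  rw [anticanonicalHeight_eq_div_gcd hxy hst, le_div_iff₀ (by exact_mod_cast hgcd₀), mul_assoc]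
  gcongr
  exact_mod_cast hgcd

lemma mul_le_anticanonicalHeight (hs : 0 < s) (hle : s ≤ t) (hxy : x.Coprime y)
    (hst : s.Coprime t) : (x * y : ℝ) ≤ anticanonicalHeight x y s t := by
  have hpos : 0 < s * t := Nat.mul_pos hs (hs.trans_le hle)
  have hgcd : Nat.gcd (x * y) (s * t) ≤ t ^ 2 :=
    (Nat.gcd_le_right _ hpos).trans (by rw [sq]; gcongr)
  have hgcd₀ : 0 < Nat.gcd (x * y) (s * t) := Nat.gcd_pos_of_pos_right _ hpos
  rw [anticanonicalHeight_eq_div_gcd hxy hst, le_div_iff₀ (by exact_mod_cast hgcd₀)]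
  calc (x * y : ℝ) * Nat.gcd (x * y) (s * t) ≤ x * y * t ^ 2 := by gcongr; exact_mod_cast hgcd
    _ = t ^ 2 * x * y := by ring

lemma anticanonicalHeight_le_sq_of_dvd {k : ℕ} (hk : 0 < k) (hx : 0 < x) (hy : 0 < y)
    (hxy : x.Coprime y) (hst : s.Coprime t) (hdvd : x * y ∣ k ^ 2 * (s * t)) :
    anticanonicalHeight x y s t ≤ ((k : ℝ) * t) ^ 2 := by
  have hgcd₀ : 0 < Nat.gcd (x * y) (s * t) := Nat.gcd_pos_of_pos_left _ (Nat.mul_pos hx hy)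
  have hle : x * y ≤ k ^ 2 * Nat.gcd (x * y) (s * t) := by
    refine Nat.le_of_dvd (by positivity) ?_
    rw [← Nat.gcd_mul_left]
    exact Nat.dvd_gcd (Dvd.intro_left _ rfl) hdvd
  rw [anticanonicalHeight_eq_div_gcd hxy hst, div_le_iff₀ (by exact_mod_cast hgcd₀)]
  calc (t : ℝ) ^ 2 * x * y = t ^ 2 * ((x * y : ℕ) : ℝ) := by push_cast; ring
    _ ≤ t ^ 2 * ((k ^ 2 * Nat.gcd (x * y) (s * t) : ℕ) : ℝ) := by gcongr
    _ = (k * t) ^ 2 * Nat.gcd (x * y) (s * t) := by push_cast; ring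

end Height

lemma lt_of_mem_zoomPoints {ε₁ ε₂ τ₁ τ₂ D B : ℝ} (hε₂ : 0 < ε₂) (hD : 0 < D) {q : ℕ × ℕ × ℕ × ℕ}
    (hq : q ∈ zoomPoints ε₁ ε₂ τ₁ τ₂ D B) : q.2.2.1 < q.2.2.2 := by
  obtain ⟨-, -, hs, -, -, -, ⟨-, hdist, -⟩, -⟩ := hq
  have hs' : (0 : ℝ) < q.2.2.1 := by exact_mod_cast hs
  have hpos : 0 < (q.2.2.2 : ℝ) / q.2.2.1 - 1 := pos_of_mul_pos_right (hε₂.trans hdist) hD.le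
  rw [sub_pos, one_lt_div hs'] at hpos
  exact_mod_cast hpos

lemma finite_zoomPoints {ε₁ ε₂ τ₁ τ₂ D B : ℝ} (hε₂ : 0 < ε₂) (hD : 0 < D) :
    (zoomPoints ε₁ ε₂ τ₁ τ₂ D B).Finite := by
  obtain ⟨N, hN⟩ := exists_nat_ge B
  have hfin : (Iic N ×ˢ Iic N ×ˢ Iic N ×ˢ Iic N : Set (ℕ × ℕ × ℕ × ℕ)).Finite :=
    (finite_Iic N).prod ((finite_Iic N).prod ((finite_Iic N).prod (finite_Iic N)))
  refine hfin.subset ?_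
  rintro ⟨x, y, s, t⟩ hq
  have hlt : s < t := lt_of_mem_zoomPoints hε₂ hD hq
  obtain ⟨hx, hy, hs, -, hxy, hst, -, hB⟩ := hq
  have ht₂ : t ^ 2 ≤ N := by
    exact_mod_cast (sq_le_anticanonicalHeight hx hy hxy hst).trans (hB.trans hN)
  have hxyN : x * y ≤ N := by
    exact_mod_cast (mul_le_anticanonicalHeight hs hlt.le hxy hst).trans (hB.trans hN)
  have htN : t ≤ N := (Nat.le_self_pow two_ne_zero t).trans ht₂
  exact ⟨(Nat.le_mul_of_pos_right x hy).trans hxyN, (Nat.le_mul_of_pos_left y hx).trans hxyN,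
    hlt.le.trans htN, htN⟩

/- Cancelling a common factor `k` in `αβ/2 = num α num β / (2 den α den β)` divides the coordinates
of the second point by `k`, but then the denominator of the height loses at most `k²`. -/
lemma anticanonicalHeight_le_sq {a b v w : ℚ≥0} (ha : 0 < a) (hb : 0 < b) (hv : v = a / b)
    (hw : w = a * b / 2) :
    anticanonicalHeight v.den v.num w.den w.num ≤ ((a.num : ℝ) * b.num) ^ 2 := by
  have han := NNRat.num_pos.2 ha
  have hbn := NNRat.num_pos.2 hb
  have hv' : v = (a.num * b.den : ℕ) / (a.den * b.num : ℕ) := by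
    nth_rw 1 [hv, ← a.num_div_den, ← b.num_div_den]
    push_cast
    rw [div_div_div_eq]
  have hw' : w = (a.num * b.num : ℕ) / (2 * (a.den * b.den) : ℕ) := by
    nth_rw 1 [hw, ← a.num_div_den, ← b.num_div_den]
    push_cast
    rw [div_mul_div_comm, div_div, mul_comm 2]
  obtain ⟨j, hy, hx⟩ := exists_eq_mul_num_and_eq_mul_den
    (mul_ne_zero a.den_ne_zero hbn.ne') hv'
  obtain ⟨k, ht, hs⟩ := exists_eq_mul_num_and_eq_mul_den
    (mul_ne_zero two_ne_zero (mul_ne_zero a.den_ne_zero b.den_ne_zero)) hw'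
  have hk : 0 < k := Nat.pos_of_ne_zero (by rintro rfl; simp [han.ne', hbn.ne'] at ht)
  have hdvd : v.den * v.num ∣ k ^ 2 * (w.den * w.num) := by
    have hprod : 2 * ((a.den * b.num) * (a.num * b.den)) = k ^ 2 * (w.den * w.num) := by
      linear_combination 2 * a.den * b.den * ht + k * w.num * hs
    rw [← hprod]
    exact (mul_dvd_mul (Dvd.intro_left j hx.symm) (Dvd.intro_left j hy.symm)).mul_left 2
  rw [← Nat.cast_mul, ht, Nat.cast_mul]
  exact anticanonicalHeight_le_sq_of_dvd hk v.den_pos (NNRat.num_pos.2 (hv ▸ div_pos ha hb))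
    v.coprime_num_den.symm w.coprime_num_den.symm hdvd

lemma mul_sqrt_two_add_div_mul_div_two_sub_one (f g : ℝ) {D : ℝ} (hD : D ≠ 0) :
    D * ((√2 + f / D) * (√2 + g / D) / 2 - 1) = (√2 * (f + g) + f * g / D) / 2 := by
  have h2 : √2 * √2 = 2 := Real.mul_self_sqrt two_pos.le
  have hf : D * (f / D) = f := mul_div_cancel₀ f hD
  have hg : D * (g / D) = g := mul_div_cancel₀ g hD
  linear_combination D / 2 * h2 + (√2 / 2 + g / (2 * D)) * hf + √2 / 2 * hg

lemma div_sub_one_sqrt_two_add_div {f g D w : ℝ} (hb : √2 + g / D ≠ 0) :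
    (w - 1) / ((√2 + f / D) / (√2 + g / D) - 1) = D * (w - 1) * (√2 + g / D) / (f - g) := by
  have hv : (√2 + f / D) / (√2 + g / D) - 1 = (f - g) / D / (√2 + g / D) := by
    rw [div_sub_one hb]
    ring
  rw [hv, div_div, div_div_eq_mul_div]
  ring

section ZoomWindow

variable {ι : Type*} {l : Filter ι} {f g D : ι → ℝ} {f₀ g₀ : ℝ}

lemma tendsto_add_div_atTop (ξ : ℝ) (hf : Tendsto f l (𝓝 f₀)) (hD : Tendsto D l atTop) :
    Tendsto (fun i => ξ + f i / D i) l (𝓝 ξ) := by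
  simpa using (tendsto_const_nhds (x := ξ)).add (hf.div_atTop hD)

lemma eventually_mem_zoomRegion {ε₁ ε₂ τ₁ τ₂ : ℝ} (hf : Tendsto f l (𝓝 f₀))
    (hg : Tendsto g l (𝓝 g₀)) (hD : Tendsto D l atTop) (hlt : g₀ < f₀)
    (hε : √2 * (f₀ + g₀) / 2 ∈ Ioo ε₂ ε₁) (hτ : (f₀ + g₀) / (f₀ - g₀) ∈ Ioo τ₂ τ₁) :
    ∀ᶠ i in l, ((√2 + f i / D i) / (√2 + g i / D i), (√2 + f i / D i) * (√2 + g i / D i) / 2) ∈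
      zoomRegion ε₁ ε₂ τ₁ τ₂ (D i) := by
  have hβ : Tendsto (fun i => √2 + g i / D i) l (𝓝 √2) := tendsto_add_div_atTop _ hg hD
  have hdist : Tendsto (fun i => (√2 * (f i + g i) + f i * g i / D i) / 2) l
      (𝓝 (√2 * (f₀ + g₀) / 2)) := by
    simpa using (((hf.add hg).const_mul √2).add ((hf.mul hg).div_atTop hD)).div_const 2
  have hratio : Tendsto
      (fun i => (√2 * (f i + g i) + f i * g i / D i) / 2 * (√2 + g i / D i) / (f i - g i)) l
      (𝓝 ((f₀ + g₀) / (f₀ - g₀))) := by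
    have hlim : √2 * (f₀ + g₀) / 2 * √2 = f₀ + g₀ := by
      linear_combination (f₀ + g₀) / 2 * Real.mul_self_sqrt two_pos.le
    rw [← hlim]
    exact (hdist.mul hβ).div (hf.sub hg) (sub_pos.2 hlt).ne'
  filter_upwards [hD.eventually_gt_atTop 0, hβ.eventually_const_lt (by positivity : 0 < √2),
    hg.eventually_lt hf hlt, hdist.eventually (Ioo_mem_nhds hε.1 hε.2),
    hratio.eventually (Ioo_mem_nhds hτ.1 hτ.2)] with i hDi hβi hlti hdisti hratioi
  rw [← mul_sqrt_two_add_div_mul_div_two_sub_one _ _ hDi.ne'] at hdisti hratioi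
  rw [← div_sub_one_sqrt_two_add_div hβi.ne'] at hratioi
  exact ⟨(one_lt_div hβi).2 (by gcongr), hdisti.1, hdisti.2.le, hratioi.1.le, hratioi.2.le⟩

end ZoomWindow

lemma exists_zoom_center {ε₁ ε₂ τ₁ τ₂ : ℝ} (hε₂ : 0 < ε₂) (hε : ε₂ < ε₁) (hτ₂ : 0 < τ₂)
    (hτ : τ₂ < τ₁) :
    ∃ f₀ g₀ : ℝ, g₀ < f₀ ∧ √2 * (f₀ + g₀) / 2 ∈ Ioo ε₂ ε₁ ∧
      (f₀ + g₀) / (f₀ - g₀) ∈ Ioo τ₂ τ₁ := by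
  obtain ⟨ε, hε'⟩ := exists_between hε
  obtain ⟨τ, hτ'⟩ := exists_between hτ
  have hε₀ : 0 < ε := hε₂.trans hε'.1
  have hτ₀ : 0 < τ := hτ₂.trans hτ'.1
  refine ⟨√2 * ε * (1 + 1 / τ) / 2, √2 * ε * (1 - 1 / τ) / 2, ?_⟩
  have hsum : √2 * ε * (1 + 1 / τ) / 2 + √2 * ε * (1 - 1 / τ) / 2 = √2 * ε := by ring
  have hdiff : √2 * ε * (1 + 1 / τ) / 2 - √2 * ε * (1 - 1 / τ) / 2 = √2 * ε / τ := by ring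
  have hdist : √2 * (√2 * ε) / 2 = ε := by
    linear_combination ε / 2 * Real.mul_self_sqrt two_pos.le
  have hratio : √2 * ε / (√2 * ε / τ) = τ := by field_simp
  rw [← sub_pos, hsum, hdiff, hdist, hratio]
  exact ⟨by positivity, hε', hτ'⟩

lemma exists_Ioo_of_eventually_add_div {ξ f₀ g₀ : ℝ} {p : ℝ → ℝ → ℝ → Prop}
    (hp : ∀ᶠ i : ℝ × ℝ × ℝ in 𝓝 f₀ ×ˢ 𝓝 g₀ ×ˢ atTop,
      p (ξ + i.1 / i.2.2) (ξ + i.2.1 / i.2.2) i.2.2) :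
    ∃ u u' v v' : ℝ, u < u' ∧ v < v' ∧ ∀ᶠ D : ℝ in atTop,
      ∀ α ∈ Ioo (ξ + u / D) (ξ + u' / D), ∀ β ∈ Ioo (ξ + v / D) (ξ + v' / D), p α β D := by
  obtain ⟨pf, hpf, pgD, hpgD, hp⟩ := eventually_prod_iff.1 hp
  obtain ⟨pg, hpg, pD, hpD, hpgD⟩ := eventually_prod_iff.1 hpgD
  obtain ⟨u, u', hu, hpf⟩ := mem_nhds_iff_exists_Ioo_subset.1 hpf
  obtain ⟨v, v', hv, hpg⟩ := mem_nhds_iff_exists_Ioo_subset.1 hpg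
  refine ⟨u, u', v, v', hu.1.trans hu.2, hv.1.trans hv.2, ?_⟩
  filter_upwards [hpD, eventually_gt_atTop 0] with D hDp hD₀ α hα β hβ
  have hmem : ∀ {a b γ : ℝ}, γ ∈ Ioo (ξ + a / D) (ξ + b / D) → D * (γ - ξ) ∈ Ioo a b := by
    intro a b γ hγ
    rwa [mem_Ioo, ← lt_sub_iff_add_lt', ← sub_lt_iff_lt_add', div_lt_iff₀' hD₀,
      lt_div_iff₀' hD₀] at hγ
  have hrescale : ∀ γ : ℝ, ξ + D * (γ - ξ) / D = γ := fun γ => by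
    rw [mul_div_cancel_left₀ _ hD₀.ne', add_sub_cancel]
  simpa only [hrescale] using hp (hpf (hmem hα)) (hpgD (hpg (hmem hβ)) hDp)

lemma exists_zoom_window {ε₁ ε₂ τ₁ τ₂ : ℝ} (hε₂ : 0 < ε₂) (hε : ε₂ < ε₁) (hτ₂ : 0 < τ₂)
    (hτ : τ₂ < τ₁) :
    ∃ u u' v v' : ℝ, u < u' ∧ v < v' ∧ ∀ᶠ D : ℝ in atTop,
      ∀ α ∈ Ioo (√2 + u / D) (√2 + u' / D), ∀ β ∈ Ioo (√2 + v / D) (√2 + v' / D),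
        α ∈ Ioo 0 2 ∧ β ∈ Ioo 0 2 ∧ (α / β, α * β / 2) ∈ zoomRegion ε₁ ε₂ τ₁ τ₂ D := by
  obtain ⟨f₀, g₀, hlt, hdist, hratio⟩ := exists_zoom_center hε₂ hε hτ₂ hτ
  have hf : Tendsto (fun i : ℝ × ℝ × ℝ => i.1) (𝓝 f₀ ×ˢ 𝓝 g₀ ×ˢ atTop) (𝓝 f₀) := tendsto_fst
  have hg : Tendsto (fun i : ℝ × ℝ × ℝ => i.2.1) (𝓝 f₀ ×ˢ 𝓝 g₀ ×ˢ atTop) (𝓝 g₀) :=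
    tendsto_fst.comp tendsto_snd
  have hD : Tendsto (fun i : ℝ × ℝ × ℝ => i.2.2) (𝓝 f₀ ×ˢ 𝓝 g₀ ×ˢ atTop) atTop :=
    tendsto_snd.comp tendsto_snd
  have hsqrt : Ioo 0 2 ∈ 𝓝 √2 :=
    Ioo_mem_nhds (by positivity) ((Real.sqrt_lt' two_pos).2 (by norm_num))
  exact exists_Ioo_of_eventually_add_div <|
    ((tendsto_add_div_atTop _ hf hD).eventually hsqrt).and <|
    ((tendsto_add_div_atTop _ hg hD).eventually hsqrt).and <|
    eventually_mem_zoomRegion hf hg hD hlt hdist hratio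

lemma primitiveCoords_mem_zoomPoints {ε₁ ε₂ τ₁ τ₂ D B : ℝ} {a b : ℚ≥0} (ha : 0 < a)
    (hb : 0 < b) (hmem : ((a : ℝ) / b, (a : ℝ) * b / 2) ∈ zoomRegion ε₁ ε₂ τ₁ τ₂ D)
    (hB : (a.num : ℝ) * b.num ≤ √B) :
    primitiveCoords (a / b) (a * b / 2) ∈ zoomPoints ε₁ ε₂ τ₁ τ₂ D B := by
  have hquot : 0 < a / b := div_pos ha hb
  have hprod : 0 < a * b / 2 := by positivity
  have hnum : (0 : ℝ) < a.num * b.num := by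
    exact_mod_cast Nat.mul_pos (NNRat.num_pos.2 ha) (NNRat.num_pos.2 hb)
  refine ⟨NNRat.den_pos _, NNRat.num_pos.2 hquot, NNRat.den_pos _, NNRat.num_pos.2 hprod,
    (NNRat.coprime_num_den _).symm, (NNRat.coprime_num_den _).symm, ?_,
    (anticanonicalHeight_le_sq ha hb rfl rfl).trans ((Real.le_sqrt' hnum).1 hB)⟩
  simp only [primitiveCoords, ← NNRat.cast_def]
  exact_mod_cast hmem

lemma primitiveCoords_div_mul_injective {a : ℚ≥0} (ha : a ≠ 0) :
    Function.Injective fun b : ℚ≥0 => primitiveCoords (a / b) (a * b / 2) := by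
  intro b b' h
  simp only [primitiveCoords, Prod.mk.injEq] at h
  have hquot : a / b = a / b' := NNRat.ext_num_den h.2.1 h.1
  rwa [div_eq_mul_inv, div_eq_mul_inv, mul_right_inj' ha, inv_inj] at hquot

lemma nnrat_num_le_mul_den {q : ℚ≥0} {c : ℝ} (hq : (q : ℝ) ≤ c) : (q.num : ℝ) ≤ c * q.den := by
  have hnum : (q.num : ℝ) = q * q.den := by exact_mod_cast q.mul_den_eq_num.symm
  rw [hnum]
  gcongr

lemma exists_eventually_sq_div_four_le_ncard_zoomPoints {ε₁ ε₂ τ₁ τ₂ : ℝ} (hε₂ : 0 < ε₂)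
    (hε : ε₂ < ε₁) (hτ₂ : 0 < τ₂) (hτ : τ₂ < τ₁) :
    ∃ C : ℝ, 0 < C ∧ ∀ᶠ D : ℝ in atTop, ∀ (K : ℕ) (B : ℝ), C * K * D ≤ √B →
      (K : ℝ) ^ 2 / 4 ≤ (zoomPoints ε₁ ε₂ τ₁ τ₂ D B).ncard := by
  obtain ⟨u, u', v, v', hu, hv, hregion⟩ := exists_zoom_window hε₂ hε hτ₂ hτ
  have hsqrt : 0 < √2 := by positivity
  obtain ⟨A, hA, hα⟩ := badlyApproximable_sqrt_two.eventually_exists_nnrat_mem_Ioo hsqrt hu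
  obtain ⟨A', hA', hβ⟩ :=
    badlyApproximable_sqrt_two.eventually_exists_finset_nnrat_mem_Ioo hsqrt hv
  refine ⟨4 * A * A', by positivity, ?_⟩
  filter_upwards [hregion, hα, hβ, eventually_gt_atTop 0] with D hD ⟨α, hα, hαden⟩ hT hD₀ K B hB
  obtain ⟨T, hcard, hT⟩ := hT K
  have hmaps : ∀ β ∈ T,
      primitiveCoords (α / β) (α * β / 2) ∈ zoomPoints ε₁ ε₂ τ₁ τ₂ D B := by
    intro β hβ
    obtain ⟨hβmem, hβden⟩ := hT β hβ
    obtain ⟨hα', hβ', hzoom⟩ := hD α hα β hβmem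
    refine primitiveCoords_mem_zoomPoints (mod_cast hα'.1) (mod_cast hβ'.1) hzoom ?_
    calc (α.num : ℝ) * β.num ≤ (2 * α.den) * (2 * β.den) := by
          gcongr
          exacts [nnrat_num_le_mul_den hα'.2.le, nnrat_num_le_mul_den hβ'.2.le]
      _ ≤ (2 * (A * √D)) * (2 * (A' * K * √D)) := by gcongr
      _ = 4 * A * A' * K * D := by linear_combination 4 * A * A' * K * Real.mul_self_sqrt hD₀.le
      _ ≤ √B := hB
  have hinj : InjOn (fun β : ℚ≥0 => primitiveCoords (α / β) (α * β / 2)) T := fun β hβ _ _ h =>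
    primitiveCoords_div_mul_injective (mod_cast (hD α hα β (hT β hβ).1).1.1.ne') h
  calc (K : ℝ) ^ 2 / 4 ≤ T.card := hcard
    _ = (T : Set ℚ≥0).ncard := by rw [ncard_coe_finset]
    _ ≤ (zoomPoints ε₁ ε₂ τ₁ τ₂ D B).ncard := by
      exact_mod_cast ncard_le_ncard_of_injOn _ hmaps hinj (finite_zoomPoints hε₂ hD₀)

lemma one_add_mul_half_sub_one_div_lt {r η : ℝ} (hr : 2 < r) (hη : η < 1) :
    (1 + η) * (1 / 2 - 1 / r) < 1 - 2 / r := by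
  have hr' : 0 < 1 / 2 - 1 / r := sub_pos.2 (one_div_lt_one_div_of_lt two_pos hr)
  calc (1 + η) * (1 / 2 - 1 / r) < 2 * (1 / 2 - 1 / r) := by gcongr; linarith
    _ = 1 - 2 / r := by ring

lemma exists_mul_rpow_mul_log_pow_le {f : ℝ → ℝ} {θ σ : ℝ} (hθσ : θ < σ) (k : ℕ)
    (hf : ∃ c : ℝ, 0 < c ∧ ∃ B₀ : ℝ, ∀ B : ℝ, B ≥ B₀ → c * B ^ σ ≤ f B) :
    ∃ c : ℝ, 0 < c ∧ ∃ B₀ : ℝ, ∀ B : ℝ, B ≥ B₀ → c * B ^ θ * Real.log B ^ k ≤ f B := by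
  obtain ⟨c, hc, B₀, hf⟩ := hf
  have hlog : ∀ᶠ B in atTop, ‖Real.log B ^ (k : ℝ)‖ ≤ 1 * ‖B ^ (σ - θ)‖ :=
    (isLittleO_log_rpow_rpow_atTop k (sub_pos.2 hθσ)).bound one_pos
  obtain ⟨B₁, hB₁⟩ := eventually_atTop.1 hlog
  refine ⟨c, hc, max (max B₀ B₁) 1, fun B hB => ?_⟩
  simp only [ge_iff_le, max_le_iff] at hB
  have hB' : 0 < B := one_pos.trans_le hB.2
  have hlogB : Real.log B ^ k ≤ B ^ (σ - θ) := by
    have h := hB₁ B hB.1.2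
    rw [Real.rpow_natCast, one_mul, Real.norm_of_nonneg (Real.rpow_pos_of_pos hB' _).le] at h
    exact (le_abs_self _).trans h
  calc c * B ^ θ * Real.log B ^ k ≤ c * B ^ θ * B ^ (σ - θ) := by gcongr
    _ = c * B ^ σ := by rw [mul_assoc, ← Real.rpow_add hB', add_sub_cancel]
    _ ≤ f B := hf B hB.1.1

theorem stmt_15_general {r ε₁ ε₂ τ₁ τ₂ : ℝ} (hr : 2 < r) (hε₂ : 0 < ε₂) (hε : ε₂ < ε₁)
    (hτ₂ : 0 < τ₂) (hτ : τ₂ < τ₁) :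
    ∃ c : ℝ, 0 < c ∧ ∃ B₀ : ℝ, ∀ B : ℝ, B ≥ B₀ →
      c * B ^ (1 - 2 / r) ≤ (zoomPoints ε₁ ε₂ τ₁ τ₂ (B ^ (1 / r)) B).ncard := by
  obtain ⟨C, hC, hcount⟩ := exists_eventually_sq_div_four_le_ncard_zoomPoints hε₂ hε hτ₂ hτ
  have hr₀ : 0 < 1 / r := one_div_pos.2 (two_pos.trans hr)
  have hθ : 0 < 1 / 2 - 1 / r := sub_pos.2 (one_div_lt_one_div_of_lt two_pos hr)
  obtain ⟨B₀, hB₀⟩ := eventually_atTop.1 <| (eventually_gt_atTop 0).and <|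
    ((tendsto_rpow_atTop hr₀).eventually hcount).and <|
    (tendsto_rpow_atTop hθ).eventually_ge_atTop C
  refine ⟨1 / (16 * C ^ 2), by positivity, B₀, fun B hB => ?_⟩
  obtain ⟨hB_pos, hcountB, hB_large⟩ := hB₀ B hB
  set K := ⌊B ^ (1 / 2 - 1 / r) / C⌋₊
  have hK_lower : B ^ (1 / 2 - 1 / r) / C / 2 ≤ K :=
    (Nat.div_two_lt_floor ((one_le_div hC).2 hB_large)).le
  have hK_upper : K ≤ B ^ (1 / 2 - 1 / r) / C := Nat.floor_le (by positivity)
  have hKB : C * K * B ^ (1 / r) ≤ √B :=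
    calc C * K * B ^ (1 / r) ≤ C * (B ^ (1 / 2 - 1 / r) / C) * B ^ (1 / r) := by gcongr
      _ = √B := by
        rw [mul_div_cancel₀ _ hC.ne', ← Real.rpow_add hB_pos, sub_add_cancel, Real.sqrt_eq_rpow]
  calc 1 / (16 * C ^ 2) * B ^ (1 - 2 / r) = (B ^ (1 / 2 - 1 / r) / C / 2) ^ 2 / 4 := by
        rw [show 1 - 2 / r = (1 / 2 - 1 / r) * (2 : ℕ) by push_cast; ring,
          Real.rpow_mul_natCast hB_pos.le]
        ring
    _ ≤ (K : ℝ) ^ 2 / 4 := by gcongr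
    _ ≤ _ := hcountB K B hKB

/-- Lower bound for the sub-critical zoom (`2 < r < 144/55`) at `Q = [1:1]×[1:1]` on the
toric surface `Y₄`: for `0 < η < 1/35`, the number of rational points `[x:y]×[s:t]` with
`y/x > 1`, `ε₂ < B^(1/r)(t/s − 1) ≤ ε₁`, `τ₂ ≤ (t/s−1)/(y/x−1) ≤ τ₁` and anticanonical
height at most `B` is at least `c·B^((1+η)(1/2−1/r))·(log B)³` for all large `B`. -/
theorem stmt_15 (r η ε₁ ε₂ τ₁ τ₂ : ℝ) (hr₁ : 2 < r) (hr₂ : r < 144 / 55)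
    (hη₁ : 0 < η) (hη₂ : η < 1 / 35) (hε₂ : 0 < ε₂) (hε : ε₂ < ε₁)
    (hτ₂ : 1 < τ₂) (hτ : τ₂ < τ₁) :
    ∃ c : ℝ, 0 < c ∧ ∃ B₀ : ℝ, ∀ B : ℝ, B ≥ B₀ →
      c * B ^ ((1 + η) * (1 / 2 - 1 / r)) * Real.log B ^ 3 ≤
      (Set.ncard {q : ℕ × ℕ × ℕ × ℕ |
        0 < q.1 ∧ 0 < q.2.1 ∧ 0 < q.2.2.1 ∧ 0 < q.2.2.2 ∧
        Nat.Coprime q.1 q.2.1 ∧ Nat.Coprime q.2.2.1 q.2.2.2 ∧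
        (q.2.1 : ℝ) / q.1 > 1 ∧
        ε₂ < B ^ (1 / r) * ((q.2.2.2 : ℝ) / q.2.2.1 - 1) ∧
        B ^ (1 / r) * ((q.2.2.2 : ℝ) / q.2.2.1 - 1) ≤ ε₁ ∧
        τ₂ ≤ ((q.2.2.2 : ℝ) / q.2.2.1 - 1) / ((q.2.1 : ℝ) / q.1 - 1) ∧
        ((q.2.2.2 : ℝ) / q.2.2.1 - 1) / ((q.2.1 : ℝ) / q.1 - 1) ≤ τ₁ ∧
        (q.2.2.2 : ℝ) ^ 2 * q.1 * q.2.1 /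
            ((Nat.gcd q.1 q.2.2.1 : ℝ) * (Nat.gcd q.1 q.2.2.2 : ℝ) *
              (Nat.gcd q.2.1 q.2.2.1 : ℝ) * (Nat.gcd q.2.1 q.2.2.2 : ℝ)) ≤ B} : ℝ) := by
  simpa only [zoomPoints, zoomRegion, anticanonicalHeight, mem_ofPred_eq, and_assoc] using
    exists_mul_rpow_mul_log_pow_le (one_add_mul_half_sub_one_div_lt hr₁ (hη₂.trans (by norm_num))) 3
      (stmt_15_general hr₁ hε₂ hε (one_pos.trans hτ₂) hτ)
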